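/- Let F be a Banach space with cotype q (2 ≤ q < ∞), let q_1, …, q_s ∈ [1, ∞), and suppose every continuous s-linear form on E_1 × ⋯ × E_s is absolutely (1; q_1, …, q_s)-summing. Then for any choice of Banach spaces E_{s+1}, …, E_n, every continuous n-linear map from E_1 × ⋯ × E_n into F is absolutely (q; q_1, …, q_s, 1, …, 1)-summing. -/

import Mathlib

open MeasureTheory

/-- Weak `ℓ_q` norm of a finite family in a normed space. -/
noncomputable def weakLpNorm (𝕜 : Type*) [RCLike 𝕜] {E : Type*} [NormedAddCommGroup E]
    [NormedSpace 𝕜 E] (q : ℝ) {m : ℕ} (x : Fin m → E) : ℝ :=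
  ⨆ φ : {φ : E →L[𝕜] 𝕜 // ‖φ‖ ≤ 1}, (∑ j, ‖φ.1 (x j)‖ ^ q) ^ (1 / q)

/-- `T` satisfies the `p`-semi-integral inequality with constant `C`, witnessed by a regular
Borel probability measure on the product of the closed dual unit balls with their
weak-star topologies. -/
def SemiIntegralWith (𝕜 : Type*) [RCLike 𝕜] {ι : Type*} [Fintype ι] {E : ι → Type*}
    [∀ i, NormedAddCommGroup (E i)] [∀ i, NormedSpace 𝕜 (E i)]
    {F : Type*} [NormedAddCommGroup F]
    (p C : ℝ) (T : (∀ i, E i) → F) : Prop :=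
  letI : MeasurableSpace (∀ i, {φ : WeakDual 𝕜 (E i) // ∀ z, ‖φ z‖ ≤ ‖z‖}) := borel _
  ∃ μ : Measure (∀ i, {φ : WeakDual 𝕜 (E i) // ∀ z, ‖φ z‖ ≤ ‖z‖}),
    IsProbabilityMeasure μ ∧ μ.Regular ∧
      ∀ x : ∀ i, E i,
        ‖T x‖ ≤ C * (∫ φ, ∏ i, ‖(φ i).1 (x i)‖ ^ p ∂μ) ^ (1 / p)

/-- The `si,p` norm: infimum of admissible constants. -/
noncomputable def siNorm (𝕜 : Type*) [RCLike 𝕜] {ι : Type*} [Fintype ι] {E : ι → Type*}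
    [∀ i, NormedAddCommGroup (E i)] [∀ i, NormedSpace 𝕜 (E i)]
    {F : Type*} [NormedAddCommGroup F]
    (p : ℝ) (T : (∀ i, E i) → F) : ℝ :=
  sInf {C : ℝ | 0 ≤ C ∧ SemiIntegralWith 𝕜 p C T}

/-- `T` is absolutely `(p; q₁,…,qₙ)`-summing with constant `C`. -/
def AbsSummingWith (𝕜 : Type*) [RCLike 𝕜] {ι : Type*} [Fintype ι] {E : ι → Type*}
    [∀ i, NormedAddCommGroup (E i)] [∀ i, NormedSpace 𝕜 (E i)]
    {F : Type*} [NormedAddCommGroup F]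
    (p : ℝ) (q : ι → ℝ) (C : ℝ) (T : (∀ i, E i) → F) : Prop :=
  ∀ (m : ℕ) (x : ∀ i, Fin m → E i),
    (∑ j, ‖T (fun i => x i j)‖ ^ p) ^ (1 / p) ≤ C * ∏ i, weakLpNorm 𝕜 (q i) (x i)

/-- `T` is `p`-dominated with constant `C`, witnessed by regular Borel probability measures
on the closed dual unit balls with their weak-star topologies. -/
def DominatedWith (𝕜 : Type*) [RCLike 𝕜] {ι : Type*} [Fintype ι] {E : ι → Type*}
    [∀ i, NormedAddCommGroup (E i)] [∀ i, NormedSpace 𝕜 (E i)]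
    {F : Type*} [NormedAddCommGroup F]
    (p C : ℝ) (T : (∀ i, E i) → F) : Prop :=
  letI : ∀ i, MeasurableSpace {φ : WeakDual 𝕜 (E i) // ∀ z, ‖φ z‖ ≤ ‖z‖} := fun i => borel _
  ∃ μ : ∀ i, Measure {φ : WeakDual 𝕜 (E i) // ∀ z, ‖φ z‖ ≤ ‖z‖},
    (∀ i, IsProbabilityMeasure (μ i)) ∧ (∀ i, (μ i).Regular) ∧
      ∀ x : ∀ i, E i,
        ‖T x‖ ≤ C * ∏ i, (∫ φ, ‖φ.1 (x i)‖ ^ p ∂(μ i)) ^ (1 / p)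

/-- `E` is an `𝓛_∞`-space. -/
def IsLinftySpace (𝕜 : Type*) [RCLike 𝕜] (E : Type*) [NormedAddCommGroup E]
    [NormedSpace 𝕜 E] : Prop :=
  ∃ lam : ℝ, 1 ≤ lam ∧ ∀ M : Submodule 𝕜 E, FiniteDimensional 𝕜 M →
    ∃ N : Submodule 𝕜 E, M ≤ N ∧ FiniteDimensional 𝕜 N ∧
      ∃ v : N ≃L[𝕜] (Fin (Module.finrank 𝕜 N) → 𝕜),
        ‖(v : N →L[𝕜] (Fin (Module.finrank 𝕜 N) → 𝕜))‖ *
          ‖(v.symm : (Fin (Module.finrank 𝕜 N) → 𝕜) →L[𝕜] N)‖ ≤ lam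

/-- `F` has cotype `q`. -/
def HasCotype (q : ℝ) (F : Type*) [NormedAddCommGroup F] : Prop :=
  ∃ C : ℝ, 0 ≤ C ∧ ∀ (m : ℕ) (x : Fin m → F),
    (∑ j, ‖x j‖ ^ q) ^ (1 / q) ≤
      C * ((∑ ε : Fin m → Bool, ‖∑ j, (if ε j then x j else -x j)‖ ^ (2 : ℝ)) / 2 ^ m)
        ^ ((1 : ℝ) / 2)

universe u v

/-! By the uniform boundedness principle, the summing constant of an `s`-linear form `S` can be
taken to be `C * ‖S‖` with `C` independent of `S`. Further variables are then absorbed by averaging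
over signs: each `z j` is the mean of `ε j • ∑ i, ε i • z i` over all choices of signs `ε`, so by
multilinearity the diagonal sum of `‖T (x j, z j)‖` is at most a mean of the sums of
`‖T (x j, Y ε)‖`, in which the additional arguments `Y ε` are frozen and bounded by weak `ℓ_1`
norms. Composing an `F`-valued `T` with functionals, this bounds the weak `ℓ_1` norm of
`(T (x j, z j))_j`, and cotype `q` bounds the strong `ℓ_q` norm of any finite family by its weak
`ℓ_1` norm. -/

theorem exists_forall_seminorm_le_norm_mul {ι 𝕜 X : Type*} [NontriviallyNormedField 𝕜]
    [SeminormedAddCommGroup X] [NormedSpace 𝕜 X] [BarrelledSpace 𝕜 X]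
    {p : ι → Seminorm 𝕜 X} (hp : ∀ a, Continuous (p a)) {w : ι → ℝ} (hw : ∀ a, 0 ≤ w a)
    (h : ∀ x, ∃ C, ∀ a, p a x ≤ C * w a) :
    ∃ C, 0 ≤ C ∧ ∀ a x, p a x ≤ C * ‖x‖ * w a := by
  lift w to ι → NNReal using hw
  have hbdd : BddAbove (Set.range fun a => (w a)⁻¹ • p a) := by
    refine Seminorm.bddAbove_range_iff.2 fun x => ?_
    obtain ⟨C, hC⟩ := h x
    refine ⟨|C|, Set.forall_mem_range.2 fun a => ?_⟩
    calc (w a : ℝ)⁻¹ * p a x ≤ (w a : ℝ)⁻¹ * (|C| * w a) := by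
          gcongr
          exact (hC a).trans (by gcongr; exact le_abs_self C)
      _ = |C| * ((w a : ℝ)⁻¹ * w a) := by ring
      _ ≤ |C| := mul_le_of_le_one_right (abs_nonneg C) inv_mul_le_one
  have hcont : Continuous (⨆ a, (w a)⁻¹ • p a : Seminorm 𝕜 X) := by
    rw [Seminorm.coe_iSup_eq hbdd]
    exact Seminorm.continuous_iSup _ (fun a => (hp a).const_smul (w a)⁻¹) hbdd
  obtain ⟨C, hC0, hC⟩ := Seminorm.bound_of_continuous_normedSpace _ hcont
  refine ⟨C, hC0.le, fun a x => ?_⟩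
  -- Where `w a = 0`, rescaling by `(w a)⁻¹ = 0` loses `p a`; there the pointwise bound gives
  -- `p a x ≤ 0`.
  rcases eq_zero_or_pos (w a) with hwa | hwa
  · obtain ⟨D, hD⟩ := h x
    simpa [hwa] using hD a
  · have hax : (w a : ℝ)⁻¹ * p a x ≤ C * ‖x‖ := (le_ciSup hbdd a x).trans (hC x)
    rwa [inv_mul_le_iff₀' (by exact_mod_cast hwa)] at hax

section WeakLpNorm

variable {𝕜 : Type*} [RCLike 𝕜] {E : Type*} [NormedAddCommGroup E] [NormedSpace 𝕜 E]
  {q : ℝ} {m : ℕ}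

theorem weakLpNorm_nonneg (x : Fin m → E) : 0 ≤ weakLpNorm 𝕜 q x :=
  Real.iSup_nonneg fun _ => by positivity

theorem weakLpNorm_le {x : Fin m → E} {B : ℝ}
    (h : ∀ φ : E →L[𝕜] 𝕜, ‖φ‖ ≤ 1 → (∑ j, ‖φ (x j)‖ ^ q) ^ (1 / q) ≤ B) :
    weakLpNorm 𝕜 q x ≤ B :=
  haveI : Nonempty {φ : E →L[𝕜] 𝕜 // ‖φ‖ ≤ 1} := ⟨0, by simp⟩
  ciSup_le fun φ => h φ.1 φ.2

theorem le_weakLpNorm (hq : 0 ≤ q) (x : Fin m → E) {φ : E →L[𝕜] 𝕜} (hφ : ‖φ‖ ≤ 1) :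
    (∑ j, ‖φ (x j)‖ ^ q) ^ (1 / q) ≤ weakLpNorm 𝕜 q x := by
  refine le_ciSup (f := fun ψ : {ψ : E →L[𝕜] 𝕜 // ‖ψ‖ ≤ 1} =>
    (∑ j, ‖ψ.1 (x j)‖ ^ q) ^ (1 / q)) ⟨(∑ j, ‖x j‖ ^ q) ^ (1 / q), ?_⟩ ⟨φ, hφ⟩
  rintro _ ⟨⟨ψ, hψ⟩, rfl⟩
  dsimp only
  gcongr with j
  exact (ψ.le_of_opNorm_le hψ (x j)).trans_eq (one_mul _)

variable (𝕜) in
theorem norm_sum_le_weakLpNorm_one (x : Fin m → E) : ‖∑ j, x j‖ ≤ weakLpNorm 𝕜 1 x := by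
  obtain ⟨φ, hφ, hφx⟩ := exists_dual_vector'' 𝕜 (∑ j, x j)
  calc ‖∑ j, x j‖ = ‖φ (∑ j, x j)‖ := by simp [hφx]
    _ ≤ ∑ j, ‖φ (x j)‖ := by simpa only [map_sum] using norm_sum_le _ _
    _ ≤ weakLpNorm 𝕜 1 x := by simpa using le_weakLpNorm zero_le_one x hφ

theorem weakLpNorm_units_smul (ε : Fin m → ℤˣ) (x : Fin m → E) :
    weakLpNorm 𝕜 q (fun j => ε j • x j) = weakLpNorm 𝕜 q x := by
  have norm_apply (φ : E →L[𝕜] 𝕜) (j : Fin m) : ‖φ (ε j • x j)‖ = ‖φ (x j)‖ := by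
    rw [Units.smul_def, map_zsmul, ← Units.smul_def, norm_units_zsmul]
  simp only [weakLpNorm, norm_apply]

theorem weakLpNorm_ite_neg (ε : Fin m → Bool) (x : Fin m → E) :
    weakLpNorm 𝕜 q (fun j => if ε j then x j else -x j) = weakLpNorm 𝕜 q x := by
  simp [weakLpNorm, apply_ite]

end WeakLpNorm

theorem HasCotype.exists_le_weakLpNorm_one (𝕜 : Type*) [RCLike 𝕜] {F : Type*}
    [NormedAddCommGroup F] [NormedSpace 𝕜 F] {q : ℝ} (hF : HasCotype q F) :
    ∃ K, 0 ≤ K ∧ ∀ (m : ℕ) (y : Fin m → F),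
      (∑ j, ‖y j‖ ^ q) ^ (1 / q) ≤ K * weakLpNorm 𝕜 1 y := by
  obtain ⟨K, hK0, hK⟩ := hF
  refine ⟨K, hK0, fun m y => (hK m y).trans (mul_le_mul_of_nonneg_left ?_ hK0)⟩
  have hsign (ε : Fin m → Bool) : ‖∑ j, (if ε j then y j else -y j)‖ ≤ weakLpNorm 𝕜 1 y :=
    (norm_sum_le_weakLpNorm_one 𝕜 _).trans_eq (weakLpNorm_ite_neg ε y)
  calc ((∑ ε : Fin m → Bool, ‖∑ j, (if ε j then y j else -y j)‖ ^ (2 : ℝ)) / 2 ^ m)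
        ^ ((1 : ℝ) / 2)
      ≤ ((∑ _ε : Fin m → Bool, weakLpNorm 𝕜 1 y ^ (2 : ℝ)) / 2 ^ m) ^ ((1 : ℝ) / 2) := by
        gcongr with ε
        exact hsign ε
    _ = (weakLpNorm 𝕜 1 y ^ (2 : ℝ)) ^ ((1 : ℝ) / 2) := by simp
    _ = weakLpNorm 𝕜 1 y := by
        rw [← Real.rpow_mul (weakLpNorm_nonneg y)]
        norm_num

section SignAveraging

theorem sum_sign_mul_sign {ι : Type*} [Fintype ι] [DecidableEq ι] (i j : ι) :
    ∑ ε : ι → ℤˣ, ((ε j * ε i : ℤˣ) : ℤ) = if i = j then (Fintype.card (ι → ℤˣ) : ℤ) else 0 := by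
  split_ifs with hij
  · simp [hij, Int.units_mul_self]
  · let χ : (ι → ℤˣ) →* ℤ :=
      (Units.coeHom ℤ).comp (Pi.evalMonoidHom (fun _ => ℤˣ) j * Pi.evalMonoidHom (fun _ => ℤˣ) i)
    refine sum_hom_units_eq_zero χ fun hχ => ?_
    have hflip : χ (Pi.mulSingle i (-1)) = -1 := by simp [χ, Ne.symm hij]
    simp [hχ] at hflip

theorem sum_sign_smul_sum_sign_smul {ι G : Type*} [Fintype ι] [DecidableEq ι] [AddCommGroup G]
    (z : ι → G) (j : ι) :
    ∑ ε : ι → ℤˣ, ε j • ∑ i, ε i • z i = Fintype.card (ι → ℤˣ) • z j := by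
  simp only [Finset.smul_sum, smul_smul]
  rw [Finset.sum_comm]
  simp only [Units.smul_def, ← Finset.sum_smul, sum_sign_mul_sign, ite_smul, zero_smul,
    Finset.sum_ite_eq', Finset.mem_univ, if_true, natCast_zsmul]

theorem norm_map_units_smul {R κ F : Type*} [Ring R] [Finite κ] {G : κ → Type*}
    [∀ l, AddCommGroup (G l)] [∀ l, Module R (G l)] [SeminormedAddCommGroup F] [Module R F]
    (A : MultilinearMap R G F) (ε : κ → ℤˣ) (y : ∀ l, G l) :
    ‖A fun l => ε l • y l‖ = ‖A y‖ := by
  have := Fintype.ofFinite κ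
  have h := (A.restrictScalars ℤ).map_smul_univ (fun l => (ε l : ℤ)) y
  simp only [MultilinearMap.coe_restrictScalars, ← Units.smul_def, ← Units.coe_prod] at h
  rw [h, norm_units_zsmul]

variable {𝕜 ι κ : Type*} [RCLike 𝕜] [Fintype ι]
  {G : κ → Type*} [∀ l, AddCommGroup (G l)] [∀ l, Module 𝕜 (G l)]
  {F : Type*} [NormedAddCommGroup F] [NormedSpace 𝕜 F]

theorem card_mul_norm_map_le_sum_sign [DecidableEq ι] [Fintype κ] [DecidableEq κ]
    (A : MultilinearMap 𝕜 G F) (z : ∀ l, ι → G l) (j : ι) :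
    Fintype.card (κ → ι → ℤˣ) * ‖A fun l => z l j‖ ≤
      ∑ ε : κ → ι → ℤˣ, ‖A fun l => ∑ i, ε l i • z l i‖ :=
  calc Fintype.card (κ → ι → ℤˣ) * ‖A fun l => z l j‖
      = ‖A fun l => (Fintype.card (ι → ℤˣ) : 𝕜) • z l j‖ := by
        rw [A.map_smul_univ, norm_smul]
        simp
    _ = ‖∑ ε : κ → ι → ℤˣ, A fun l => ε l j • ∑ i, ε l i • z l i‖ := by
        simp only [Nat.cast_smul_eq_nsmul, ← sum_sign_smul_sum_sign_smul]
        rw [A.map_sum]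
    _ ≤ ∑ ε : κ → ι → ℤˣ, ‖A fun l => ε l j • ∑ i, ε l i • z l i‖ := norm_sum_le _ _
    _ = ∑ ε : κ → ι → ℤˣ, ‖A fun l => ∑ i, ε l i • z l i‖ :=
        Finset.sum_congr rfl fun ε _ => norm_map_units_smul A (fun l => ε l j) _

theorem sum_norm_map_le_of_forall_sign [Finite κ] {A : ι → MultilinearMap 𝕜 G F}
    {z : ∀ l, ι → G l} {B : ℝ}
    (hB : ∀ ε : κ → ι → ℤˣ, ∑ j, ‖A j fun l => ∑ i, ε l i • z l i‖ ≤ B) :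
    ∑ j, ‖A j fun l => z l j‖ ≤ B := by
  classical
  have := Fintype.ofFinite κ
  have hcard : (0 : ℝ) < Fintype.card (κ → ι → ℤˣ) := by exact_mod_cast Fintype.card_pos
  refine le_of_mul_le_mul_left ?_ hcard
  calc Fintype.card (κ → ι → ℤˣ) * ∑ j, ‖A j fun l => z l j‖
      ≤ ∑ j, ∑ ε : κ → ι → ℤˣ, ‖A j fun l => ∑ i, ε l i • z l i‖ := by
        rw [Finset.mul_sum]
        gcongr with j
        exact card_mul_norm_map_le_sum_sign (A j) z j
    _ = ∑ ε : κ → ι → ℤˣ, ∑ j, ‖A j fun l => ∑ i, ε l i • z l i‖ := Finset.sum_comm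
    _ ≤ ∑ _ε : κ → ι → ℤˣ, B := by
        gcongr with ε
        exact hB ε
    _ = Fintype.card (κ → ι → ℤˣ) * B := by simp

end SignAveraging

section FixRight

variable {𝕜 ι κ : Type*} [NontriviallyNormedField 𝕜] [Fintype ι] [Fintype κ]
  {V : ι ⊕ κ → Type*} [∀ a, NormedAddCommGroup (V a)] [∀ a, NormedSpace 𝕜 (V a)]
  {F : Type*} [NormedAddCommGroup F] [NormedSpace 𝕜 F]

theorem norm_map_sumRec_le (T : ContinuousMultilinearMap 𝕜 V F) (u : ∀ i, V (Sum.inl i))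
    (v : ∀ l, V (Sum.inr l)) :
    ‖T (Sum.rec u v)‖ ≤ (‖T‖ * ∏ l, ‖v l‖) * ∏ i, ‖u i‖ := by
  refine (T.le_opNorm _).trans_eq ?_
  rw [Fintype.prod_sum_type]
  ring

/-- The continuous multilinear map `u ↦ T (u, v)` obtained from a map `T` of two blocks of
variables by fixing the value `v` of the right block. -/
noncomputable def fixRight (T : ContinuousMultilinearMap 𝕜 V F) (v : ∀ l, V (Sum.inr l)) :
    ContinuousMultilinearMap 𝕜 (fun i => V (Sum.inl i)) F :=
  letI A : MultilinearMap 𝕜 (fun i => V (Sum.inl i)) F :=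
    { toFun u := T (Sum.rec u v)
      map_update_add' := by classical intros; simp
      map_update_smul' := by classical intros; simp }
  A.mkContinuous (‖T‖ * ∏ l, ‖v l‖) fun u => norm_map_sumRec_le T u v

theorem norm_fixRight_le (T : ContinuousMultilinearMap 𝕜 V F) (v : ∀ l, V (Sum.inr l)) :
    ‖fixRight T v‖ ≤ ‖T‖ * ∏ l, ‖v l‖ :=
  MultilinearMap.mkContinuous_norm_le _ (by positivity) _

end FixRight

section AbsSumming

variable {𝕜 : Type*} [RCLike 𝕜] {ι : Type*} [Fintype ι] {F : Type*} [NormedAddCommGroup F]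

theorem absSummingWith_one_iff {E : ι → Type*} [∀ i, NormedAddCommGroup (E i)]
    [∀ i, NormedSpace 𝕜 (E i)] {q : ι → ℝ} {C : ℝ} {T : (∀ i, E i) → F} :
    AbsSummingWith 𝕜 1 q C T ↔ ∀ (m : ℕ) (x : ∀ i, Fin m → E i),
      ∑ j, ‖T fun i => x i j‖ ≤ C * ∏ i, weakLpNorm 𝕜 (q i) (x i) := by
  simp [AbsSummingWith]

variable [NormedSpace 𝕜 F]

theorem exists_forall_absSummingWith_one_mul_norm [CompleteSpace F] {E : ι → Type*}
    [∀ i, NormedAddCommGroup (E i)] [∀ i, NormedSpace 𝕜 (E i)] {q : ι → ℝ}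
    (H : ∀ T : ContinuousMultilinearMap 𝕜 E F, ∃ C, AbsSummingWith 𝕜 1 q C ⇑T) :
    ∃ C, 0 ≤ C ∧
      ∀ T : ContinuousMultilinearMap 𝕜 E F, AbsSummingWith 𝕜 1 q (C * ‖T‖) ⇑T := by
  let p : (Σ m : ℕ, ∀ i, Fin m → E i) → Seminorm 𝕜 (ContinuousMultilinearMap 𝕜 E F) := fun a =>
    ∑ j, (normSeminorm 𝕜 F).comp
      (ContinuousMultilinearMap.apply 𝕜 E F fun i => a.2 i j).toLinearMap
  have p_apply (a T) : p a T = ∑ j, ‖T fun i => a.2 i j‖ := by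
    simp [p]
  have continuous_p (a) : Continuous (p a) := by
    simp only [funext (p_apply a)]
    fun_prop
  obtain ⟨C, hC0, hC⟩ := exists_forall_seminorm_le_norm_mul continuous_p
    (w := fun a => ∏ i, weakLpNorm 𝕜 (q i) (a.2 i))
    (fun a => Finset.prod_nonneg fun i _ => weakLpNorm_nonneg _)
    (fun T => (H T).imp fun C hC a => by
      simpa only [p_apply] using absSummingWith_one_iff.1 hC a.1 a.2)
  refine ⟨C, hC0, fun T => absSummingWith_one_iff.2 fun m x => ?_⟩
  simpa only [p_apply] using hC ⟨m, x⟩ T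

variable {κ : Type*} [Fintype κ] {V : ι ⊕ κ → Type*} [∀ a, NormedAddCommGroup (V a)]
  [∀ a, NormedSpace 𝕜 (V a)]

theorem absSummingWith_one_sumElim_mul_norm {q' : ι → ℝ} {C : ℝ} (hC0 : 0 ≤ C)
    (hC : ∀ S : ContinuousMultilinearMap 𝕜 (fun i => V (Sum.inl i)) F,
      AbsSummingWith 𝕜 1 q' (C * ‖S‖) ⇑S)
    (T : ContinuousMultilinearMap 𝕜 V F) :
    AbsSummingWith 𝕜 1 (Sum.elim q' fun _ => 1) (C * ‖T‖) ⇑T := by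
  refine absSummingWith_one_iff.2 fun m x => ?_
  let A (j : Fin m) : MultilinearMap 𝕜 (fun l => V (Sum.inr l)) F :=
    T.toMultilinearMap.currySum fun i => x (Sum.inl i) j
  have hA (j : Fin m) : T (fun a => x a j) = A j fun l => x (Sum.inr l) j :=
    congrArg T (funext fun a => by cases a <;> rfl)
  simp only [hA, Fintype.prod_sum_type, Sum.elim_inl, Sum.elim_inr]
  refine sum_norm_map_le_of_forall_sign fun ε => ?_
  let Y (l : κ) : V (Sum.inr l) := ∑ j, ε l j • x (Sum.inr l) j
  have norm_Y_le (l : κ) : ‖Y l‖ ≤ weakLpNorm 𝕜 1 (x (Sum.inr l)) :=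
    (norm_sum_le_weakLpNorm_one 𝕜 _).trans_eq (weakLpNorm_units_smul _ _)
  have prod_weakLpNorm_nonneg : 0 ≤ ∏ i, weakLpNorm 𝕜 (q' i) (x (Sum.inl i)) :=
    Finset.prod_nonneg fun i _ => weakLpNorm_nonneg _
  calc ∑ j, ‖A j Y‖
      ≤ C * ‖fixRight T Y‖ * ∏ i, weakLpNorm 𝕜 (q' i) (x (Sum.inl i)) :=
        absSummingWith_one_iff.1 (hC (fixRight T Y)) m fun i => x (Sum.inl i)
    _ ≤ C * (‖T‖ * ∏ l, ‖Y l‖) * ∏ i, weakLpNorm 𝕜 (q' i) (x (Sum.inl i)) := by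
        gcongr
        exact norm_fixRight_le T Y
    _ ≤ C * (‖T‖ * ∏ l, weakLpNorm 𝕜 1 (x (Sum.inr l))) *
          ∏ i, weakLpNorm 𝕜 (q' i) (x (Sum.inl i)) := by
        gcongr
        exact norm_Y_le _
    _ = C * ‖T‖ * ((∏ i, weakLpNorm 𝕜 (q' i) (x (Sum.inl i))) *
          ∏ l, weakLpNorm 𝕜 1 (x (Sum.inr l))) := by ring

theorem weakLpNorm_one_map_le {q : ι → ℝ} {C : ℝ} (hC0 : 0 ≤ C) {E : ι → Type*}
    [∀ i, NormedAddCommGroup (E i)] [∀ i, NormedSpace 𝕜 (E i)]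
    (hC : ∀ S : ContinuousMultilinearMap 𝕜 E 𝕜, AbsSummingWith 𝕜 1 q (C * ‖S‖) ⇑S)
    (T : ContinuousMultilinearMap 𝕜 E F) {m : ℕ} (x : ∀ i, Fin m → E i) :
    weakLpNorm 𝕜 1 (fun j => T fun i => x i j) ≤ C * ‖T‖ * ∏ i, weakLpNorm 𝕜 (q i) (x i) := by
  refine weakLpNorm_le fun φ hφ => (hC (φ.compContinuousMultilinearMap T) m x).trans ?_
  have norm_comp_le : ‖φ.compContinuousMultilinearMap T‖ ≤ ‖T‖ :=
    (φ.norm_compContinuousMultilinearMap_le T).trans (mul_le_of_le_one_left (norm_nonneg T) hφ)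
  have prod_weakLpNorm_nonneg : 0 ≤ ∏ i, weakLpNorm 𝕜 (q i) (x i) :=
    Finset.prod_nonneg fun i _ => weakLpNorm_nonneg _
  gcongr

theorem absSumming_cotype_extend_general {q : ℝ} (hF : HasCotype q F) {q' : ι → ℝ}
    (H : ∀ S : ContinuousMultilinearMap 𝕜 (fun i => V (Sum.inl i)) 𝕜,
      ∃ C, AbsSummingWith 𝕜 1 q' C ⇑S)
    (T : ContinuousMultilinearMap 𝕜 V F) :
    ∃ C, 0 ≤ C ∧ AbsSummingWith 𝕜 q (Sum.elim q' fun _ => 1) C ⇑T := by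
  obtain ⟨C, hC0, hC⟩ := exists_forall_absSummingWith_one_mul_norm H
  obtain ⟨K, hK0, hK⟩ := hF.exists_le_weakLpNorm_one 𝕜
  refine ⟨K * (C * ‖T‖), by positivity, fun m x => ?_⟩
  calc (∑ j, ‖T fun a => x a j‖ ^ q) ^ (1 / q)
      ≤ K * weakLpNorm 𝕜 1 (fun j => T fun a => x a j) := hK m _
    _ ≤ K * (C * ‖T‖ * ∏ a, weakLpNorm 𝕜 (Sum.elim q' (fun _ => 1) a) (x a)) := by
        gcongr
        exact weakLpNorm_one_map_le hC0 (absSummingWith_one_sumElim_mul_norm hC0 hC) T x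
    _ = K * (C * ‖T‖) * ∏ a, weakLpNorm 𝕜 (Sum.elim q' (fun _ => 1) a) (x a) :=
        (mul_assoc ..).symm

end AbsSumming

/-- If `F` has cotype `q` (`2 ≤ q`) and every continuous `s`-linear scalar
form on `E₁ × ⋯ × E_s` is absolutely `(1; q₁,…,q_s)`-summing, then for any further Banach
spaces `G₁,…,G_k`, every continuous multilinear map from `E₁ × ⋯ × E_s × G₁ × ⋯ × G_k` into
`F` is absolutely `(q; q₁,…,q_s,1,…,1)`-summing. -/
theorem absSumming_cotype_extend {𝕜 : Type v} [RCLike 𝕜] {s k : ℕ} (hs : 1 ≤ s)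
    {E : Fin s → Type u} [∀ i, NormedAddCommGroup (E i)] [∀ i, NormedSpace 𝕜 (E i)]
    [∀ i, CompleteSpace (E i)]
    {F : Type*} [NormedAddCommGroup F] [NormedSpace 𝕜 F] [CompleteSpace F]
    {q : ℝ} (hq2 : 2 ≤ q) (hF : HasCotype q F)
    {q' : Fin s → ℝ} (hq' : ∀ i, 1 ≤ q' i)
    (H : ∀ T : ContinuousMultilinearMap 𝕜 E 𝕜, ∃ C, 0 ≤ C ∧ AbsSummingWith 𝕜 1 q' C ⇑T) :
    ∀ (G : Fin k → Type u) [∀ j, NormedAddCommGroup (G j)] [∀ j, NormedSpace 𝕜 (G j)]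
      [∀ j, CompleteSpace (G j)],
      letI : ∀ i : Fin s ⊕ Fin k, NormedAddCommGroup (Sum.elim E G i) := fun i =>
        Sum.rec (motive := fun i => NormedAddCommGroup (Sum.elim E G i))
          (fun a => inferInstanceAs (NormedAddCommGroup (E a)))
          (fun b => inferInstanceAs (NormedAddCommGroup (G b))) i
      letI : ∀ i : Fin s ⊕ Fin k, NormedSpace 𝕜 (Sum.elim E G i) := fun i =>
        Sum.rec (motive := fun i => NormedSpace 𝕜 (Sum.elim E G i))
          (fun a => inferInstanceAs (NormedSpace 𝕜 (E a)))
          (fun b => inferInstanceAs (NormedSpace 𝕜 (G b))) i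
      ∀ T : ContinuousMultilinearMap 𝕜 (Sum.elim E G) F,
        ∃ C, 0 ≤ C ∧ AbsSummingWith 𝕜 q (Sum.elim q' (fun _ => 1)) C ⇑T := by
  intro G _ _ _ T
  let : ∀ a, NormedAddCommGroup (Sum.elim E G a) :=
    Sum.rec ‹∀ i, NormedAddCommGroup (E i)› ‹∀ l, NormedAddCommGroup (G l)›
  let : ∀ a, NormedSpace 𝕜 (Sum.elim E G a) :=
    Sum.rec ‹∀ i, NormedSpace 𝕜 (E i)› ‹∀ l, NormedSpace 𝕜 (G l)›
  exact absSumming_cotype_extend_general hF (fun S => (H S).imp fun _ hC => hC.2) T
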